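/- Central limit theorem for blocks of a fixed size: fix an integer l ≥ 1, let X_n^{(l)} be the number of blocks of size l in a uniformly random non-crossing partition of [n], let μ_n = (1/C_n)·Σ_{π ∈ NC(n)} k_l(π) be its mean and σ_n² = (1/C_n)·Σ_{π} k_l(π)² − μ_n² its variance. Then for every real x, the probability (1/C_n)·#{π ∈ NC(n) : k_l(π) ≤ μ_n + x·σ_n} converges, as n → ∞, to Φ(x), the cumulative distribution function of the standard Gaussian distribution. -/

import Mathlib

/-- A finite partition of `Fin n` (representing `[n] = {1, …, n}`) is *non-crossing* if
there are no indices `a < b < c < d` with `a, c` in one block and `b, d` in a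
different block. -/
def IsNonCrossing {n : ℕ} (P : Finpartition (Finset.univ : Finset (Fin n))) : Prop :=
  ∀ a b c d : Fin n, a < b → b < c → c < d →
    ∀ B ∈ P.parts, ∀ B' ∈ P.parts,
      a ∈ B → c ∈ B → b ∈ B' → d ∈ B' → B = B'

/-- The type of non-crossing partitions of `[n]`. -/
def NCPart (n : ℕ) : Type :=
  {P : Finpartition (Finset.univ : Finset (Fin n)) // IsNonCrossing P}

noncomputable instance (n : ℕ) : Fintype (NCPart n) :=
  Fintype.ofInjective (fun P => P.1.parts)
    (fun _ _ h => Subtype.ext (Finpartition.ext h))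

/-- The number of blocks of a non-crossing partition. -/
def numBlocks {n : ℕ} (P : NCPart n) : ℕ := P.1.parts.card

/-- The number of blocks of size `l` of a non-crossing partition. -/
def numBlocksOfSize {n : ℕ} (l : ℕ) (P : NCPart n) : ℕ :=
  (P.1.parts.filter fun B => B.card = l).card

open Filter ProbabilityTheory

/-- The mean number of blocks of size `l` of a uniformly random non-crossing partition
of `[n]`. -/
noncomputable def meanBlocksOfSize (l n : ℕ) : ℝ :=
  (∑ π : NCPart n, (numBlocksOfSize l π : ℝ)) / (Fintype.card (NCPart n) : ℝ)

/-- The variance of the number of blocks of size `l` of a uniformly random non-crossing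
partition of `[n]`. -/
noncomputable def varBlocksOfSize (l n : ℕ) : ℝ :=
  (∑ π : NCPart n, (numBlocksOfSize l π : ℝ) ^ 2) / (Fintype.card (NCPart n) : ℝ) -
    (meanBlocksOfSize l n) ^ 2

/-!
Placing the size of each block at its least element, and `0` elsewhere, turns a non-crossing
partition of `[n]` into a Łukasiewicz sequence of length `n + 1`. By the cycle lemma exactly one
cyclic rotation of every composition of `n` into `n + 1` nonnegative parts is of this form, and
rotations preserve the number of parts equal to `l`. So the number of blocks of size `l` is
distributed as the number of parts equal to `l` in a uniform composition, that is, among `n + 1`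
independent geometric variables of mean `1` conditioned on their sum being `n`.

The joint characteristic function of that number and the sum, inverted in the sum variable as in
the proof of the local limit theorem, shows that the conditioned number is asymptotically Gaussian:
conditioning on the sum reduces the variance to that of the residual of the indicator of `{l}`
after linear regression on the identity. Convergence in law does not control the mean and variance
used for the normalization; these come from exact binomial formulas for the factorial moments.
-/

namespace NonCrossing

open Finset MeasureTheory Topology

section BlockMin

variable {n : ℕ} (P : Finpartition (univ : Finset (Fin n)))

/-- The least element of the block of `P` that contains `m`. -/
noncomputable def blockMin (m : Fin n) : Fin n :=
  (P.part m).min' ⟨m, P.mem_part (mem_univ m)⟩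

lemma blockMin_mem_part (m : Fin n) : blockMin P m ∈ P.part m :=
  min'_mem _ _

lemma blockMin_le (m : Fin n) : blockMin P m ≤ m :=
  min'_le _ _ (P.mem_part (mem_univ m))

lemma part_blockMin (m : Fin n) : P.part (blockMin P m) = P.part m :=
  P.part_eq_of_mem (P.part_mem.2 (mem_univ m)) (blockMin_mem_part P m)

variable {P}

lemma blockMin_eq_iff {m m' : Fin n} : blockMin P m = blockMin P m' ↔ m ∈ P.part m' := by
  rw [P.mem_part_iff_part_eq_part (mem_univ m) (mem_univ m')]
  refine ⟨fun h => ?_, fun h => ?_⟩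
  · rw [← part_blockMin P m, h, part_blockMin]
  · simp only [blockMin, h]

lemma blockMin_blockMin (m : Fin n) : blockMin P (blockMin P m) = blockMin P m :=
  blockMin_eq_iff.2 (blockMin_mem_part P m)

lemma blockMin_injective :
    Function.Injective (blockMin : Finpartition (univ : Finset (Fin n)) → Fin n → Fin n) := by
  intro P Q h
  have hpart (m : Fin n) : P.part m = Q.part m := by
    ext m'
    rw [← blockMin_eq_iff, ← blockMin_eq_iff, h]
  refine Finpartition.ext (Finset.ext fun B => ⟨fun hB => ?_, fun hB => ?_⟩)
  · obtain ⟨m, hm⟩ := P.nonempty_of_mem_parts hB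
    rw [← P.part_eq_of_mem hB hm, hpart]
    exact Q.part_mem.2 (mem_univ m)
  · obtain ⟨m, hm⟩ := Q.nonempty_of_mem_parts hB
    rw [← Q.part_eq_of_mem hB hm, ← hpart]
    exact P.part_mem.2 (mem_univ m)

lemma isNonCrossing_iff_blockMin : IsNonCrossing P ↔ ∀ a b c d, a < b → b < c → c < d →
    blockMin P a = blockMin P c → blockMin P b = blockMin P d → blockMin P a = blockMin P b := by
  refine ⟨fun h a b c d hab hbc hcd hac hbd => ?_,
    fun h a b c d hab hbc hcd B hB B' hB' haB hcB hbB' hdB' => ?_⟩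
  · rw [blockMin_eq_iff] at hac hbd ⊢
    have hcd' := h a b c d hab hbc hcd _ (P.part_mem.2 (mem_univ c)) _ (P.part_mem.2 (mem_univ d))
      hac (P.mem_part (mem_univ c)) hbd (P.mem_part (mem_univ d))
    rw [← hcd'] at hbd
    rwa [P.part_eq_of_mem (P.part_mem.2 (mem_univ c)) hbd]
  · obtain rfl := P.part_eq_of_mem hB haB
    obtain rfl := P.part_eq_of_mem hB' hbB'
    rw [← P.mem_part_iff_part_eq_part (mem_univ a) (mem_univ b), ← blockMin_eq_iff]
    exact h a b c d hab hbc hcd (blockMin_eq_iff.2 hcB).symm (blockMin_eq_iff.2 hdB').symm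

lemma exists_blockMin_eq {β : Fin n → Fin n} (hle : ∀ m, β m ≤ m)
    (hidem : ∀ m, β (β m) = β m) : ∃ P : Finpartition univ, blockMin P = β := by
  classical
  let P : Finpartition (univ : Finset (Fin n)) := .ofSetoid (.ker β)
  have hpart {x y : Fin n} : x ∈ P.part y ↔ β y = β x := Finpartition.mem_part_ofSetoid_iff_rel
  refine ⟨P, funext fun m => le_antisymm (min'_le _ _ (hpart.2 (hidem m).symm)) ?_⟩
  rw [hpart.1 (blockMin_mem_part P m)]
  exact hle _

lemma lt_of_blockMin_lt (hP : IsNonCrossing P) {j m : Fin n}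
    (h : blockMin P m < blockMin P j) (hm : blockMin P j ≤ m) : j < m := by
  by_contra! hmj
  have hmj' : m < j := hmj.lt_of_ne fun e => h.ne (by rw [e])
  have hm' : blockMin P j < m := hm.lt_of_ne fun e => h.ne (by rw [← e, blockMin_blockMin])
  have := isNonCrossing_iff_blockMin.1 hP _ _ _ _ h hm' hmj' (blockMin_blockMin m)
    (blockMin_blockMin j)
  rw [blockMin_blockMin, blockMin_blockMin] at this
  exact h.ne this

end BlockMin

section Code

/-- The Łukasiewicz path with steps `a j - 1`, where the step sequence `a` is extended
periodically to all of `ℕ`, so that cyclic shifts of `a` shift the path. -/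
def walk {n : ℕ} (a : Fin (n + 1) → ℕ) (k : ℕ) : ℤ :=
  ∑ j ∈ range k, ((a (Fin.ofNat (n + 1) j) : ℤ) - 1)

/-- The Łukasiewicz sequences of length `n + 1`: their path stays nonnegative up to time `n` and
is at `-1` at time `n + 1`. -/
def lukasiewicz (n : ℕ) : Finset (Fin (n + 1) → ℕ) :=
  {a ∈ piAntidiag univ n | ∀ k ≤ n, 0 ≤ walk a k}

/-- The last time `i ≤ j` at which the path `S` is at height at most `S (j + 1)`. For the path of
a non-crossing partition this recovers the least element of the block of `j`. -/
def lastBelow (S : ℕ → ℤ) (j : ℕ) : ℕ :=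
  Nat.findGreatest (fun i => S i ≤ S (j + 1)) j

/-- The Łukasiewicz sequence of `P`: the size of the block with least element `i` at such
positions `i`, and `0` elsewhere. The extra last position is always `0`. -/
noncomputable def code {n : ℕ} (P : Finpartition (univ : Finset (Fin n)))
    (i : Fin (n + 1)) : ℕ :=
  #{m : Fin n | (blockMin P m).castSucc = i}

section LastBelow

variable {S : ℕ → ℤ} {i j : ℕ}

lemma lastBelow_le : lastBelow S j ≤ j :=
  Nat.findGreatest_le j

lemma apply_lastBelow_le (h : S 0 ≤ S (j + 1)) : S (lastBelow S j) ≤ S (j + 1) :=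
  Nat.findGreatest_spec (P := fun i => S i ≤ S (j + 1)) (Nat.zero_le j) h

lemma lt_apply_of_lastBelow_lt (hi : lastBelow S j < i) (hij : i ≤ j) : S (j + 1) < S i :=
  not_le.1 (Nat.findGreatest_is_greatest hi hij)

lemma lastBelow_eq (hij : i ≤ j) (h : S i ≤ S (j + 1))
    (hlt : ∀ k, i < k → k ≤ j → S (j + 1) < S k) : lastBelow S j = i :=
  Nat.findGreatest_eq_iff.2 ⟨hij, fun _ => h, fun k hik hkj => not_le.2 (hlt k hik hkj)⟩

lemma lastBelow_lastBelow (h : S 0 ≤ S (j + 1)) :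
    lastBelow S (lastBelow S j) = lastBelow S j := by
  refine lastBelow_eq le_rfl ?_ fun k _ _ => by omega
  rcases lastBelow_le.eq_or_lt with e | hlt
  · rw [e]
    nth_rw 1 [← e]
    exact apply_lastBelow_le h
  · exact (apply_lastBelow_le h).trans (lt_apply_of_lastBelow_lt (by omega) hlt).le

lemma lastBelow_eq_of_lt_of_lt_of_lt {a b c d : ℕ} (hab : a < b) (hbc : b < c) (hcd : c < d)
    (hc : S 0 ≤ S (c + 1)) (hd : S 0 ≤ S (d + 1))
    (hac : lastBelow S a = lastBelow S c) (hbd : lastBelow S b = lastBelow S d) :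
    lastBelow S a = lastBelow S b := by
  have hSc := apply_lastBelow_le hc
  have hSd := apply_lastBelow_le hd
  have ha : lastBelow S a ≤ a := lastBelow_le
  have hb : lastBelow S b ≤ b := lastBelow_le
  rcases lt_trichotomy (lastBelow S a) (lastBelow S b) with hlt | heq | hlt
  · have h₁ : S (c + 1) < S (lastBelow S b) := lt_apply_of_lastBelow_lt (by omega) (by omega)
    have h₂ : S (d + 1) < S (c + 1) := lt_apply_of_lastBelow_lt (by omega) (by omega)
    rw [← hbd] at hSd
    omega
  · exact heq
  · have h₁ : S (b + 1) < S (lastBelow S a) := lt_apply_of_lastBelow_lt (by omega) (by omega)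
    have h₂ : S (c + 1) < S (b + 1) := lt_apply_of_lastBelow_lt (by omega) (by omega)
    rw [← hac] at hSc
    omega

/-- The endpoints `S (j + 1)` of the times `j` with `lastBelow S j = i` are distinct heights
between `S i` and `S (i + 1)`. -/
lemma card_lastBelow_eq_le {n : ℕ} (h : ∀ {j}, j < n → S 0 ≤ S (j + 1)) (i : ℕ) :
    #{j : Fin n | lastBelow S j = i} ≤ (S (i + 1) + 1 - S i).toNat := by
  rw [← Int.card_Icc]
  refine card_le_card_of_injOn (fun j => S (j + 1)) (fun j hj => ?_) fun j hj j' hj' heq => ?_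
  · obtain rfl := (mem_filter.1 hj).2
    refine mem_coe.2 (mem_Icc.2 ⟨apply_lastBelow_le (h j.2), ?_⟩)
    rcases lastBelow_le.eq_or_lt with e | hlt
    · rw [e]
    · exact (lt_apply_of_lastBelow_lt (Nat.lt_succ_self _) hlt).le
  · have hj := (mem_filter.1 hj).2
    have hj' := (mem_filter.1 hj').2
    have hle : lastBelow S j ≤ j := lastBelow_le
    have hle' : lastBelow S j' ≤ j' := lastBelow_le
    rcases lt_trichotomy j j' with hlt | rfl | hlt
    · exact absurd heq (lt_apply_of_lastBelow_lt (by omega) hlt).ne'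
    · rfl
    · exact absurd heq (lt_apply_of_lastBelow_lt (by omega) hlt).ne

end LastBelow

variable {n : ℕ} (P : Finpartition (univ : Finset (Fin n)))

lemma walk_zero (a : Fin (n + 1) → ℕ) : walk a 0 = 0 := by
  simp [walk]

lemma walk_succ (a : Fin (n + 1) → ℕ) (k : ℕ) :
    walk a (k + 1) = walk a k + (a (Fin.ofNat (n + 1) k) - 1) :=
  sum_range_succ _ _

lemma walk_eq_sum_sub (a : Fin (n + 1) → ℕ) (k : ℕ) :
    walk a k = (∑ j ∈ range k, a (Fin.ofNat (n + 1) j) : ℕ) - k := by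
  simp [walk, sum_sub_distrib]

lemma sum_range_ofNat {M : Type*} [AddCommMonoid M] (f : Fin (n + 1) → M) :
    ∑ j ∈ range (n + 1), f (Fin.ofNat (n + 1) j) = ∑ i, f i := by
  rw [← Fin.sum_univ_eq_sum_range (fun j => f (Fin.ofNat (n + 1) j))]
  exact sum_congr rfl fun i _ => by rw [Fin.ofNat_val_eq_self]

lemma sum_range_code {k : ℕ} (hk : k ≤ n + 1) :
    ∑ j ∈ range k, code P (Fin.ofNat (n + 1) j) = #{m : Fin n | (blockMin P m : ℕ) < k} := by
  rw [card_eq_sum_card_fiberwise (f := fun m => (blockMin P m : ℕ)) (t := range k)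
    fun m hm => by simpa using hm]
  refine sum_congr rfl fun j hj => ?_
  rw [mem_range] at hj
  rw [code, filter_filter]
  congr 1
  ext m
  simp only [mem_filter, mem_univ, true_and, Fin.ext_iff, Fin.val_castSucc, Fin.val_ofNat,
    Nat.mod_eq_of_lt (hj.trans_le hk)]
  omega

lemma sum_code : ∑ i, code P i = n := by
  rw [← sum_range_ofNat, sum_range_code P le_rfl, filter_true_of_mem fun m _ => by omega,
    card_univ, Fintype.card_fin]

lemma walk_code {k : ℕ} (hk : k ≤ n) :
    walk (code P) k = #{m : Fin n | k ≤ m ∧ (blockMin P m : ℕ) < k} := by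
  have hsplit : #{m : Fin n | (blockMin P m : ℕ) < k} =
      #{m : Fin n | k ≤ m ∧ (blockMin P m : ℕ) < k} + #{m : Fin n | (m : ℕ) < k} := by
    rw [← card_union_of_disjoint (disjoint_filter.2 fun m _ => by omega), ← filter_or]
    congr 1
    refine filter_congr fun m _ => ?_
    have := Fin.le_def.1 (blockMin_le P m)
    omega
  rw [walk_eq_sum_sub, sum_range_code P (by omega), hsplit, Fin.card_filter_val_lt,
    min_eq_right hk]
  push_cast
  ring

lemma code_mem_lukasiewicz : code P ∈ lukasiewicz n := by
  simp only [lukasiewicz, mem_filter, mem_piAntidiag, mem_univ, implies_true, and_true]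
  refine ⟨sum_code P, fun k hk => ?_⟩
  rw [walk_code P hk]
  positivity

variable {P}

lemma lastBelow_walk_code (hP : IsNonCrossing P) (j : Fin n) :
    lastBelow (walk (code P)) j = blockMin P j := by
  have hle := Fin.le_def.1 (blockMin_le P j)
  refine lastBelow_eq hle ?_ fun k hk hkj => ?_
  · rw [walk_code P (by omega), walk_code P (by omega)]
    refine Nat.cast_le.2 (card_le_card fun m => ?_)
    simp only [mem_filter, mem_univ, true_and]
    rintro ⟨hm, hlt⟩
    have := Fin.lt_def.1 (lt_of_blockMin_lt hP hlt hm)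
    omega
  · rw [walk_code P (by omega), walk_code P (by omega)]
    refine Nat.cast_lt.2 (card_lt_card (ssubset_iff_of_subset (fun m => ?_) |>.2 ⟨j, ?_, ?_⟩))
    · simp only [mem_filter, mem_univ, true_and]
      rintro ⟨hm, hlt⟩
      refine ⟨by omega, ?_⟩
      by_contra! hkm
      have := Fin.lt_def.1 <| lt_of_blockMin_lt hP (j := m) (m := j)
        (Fin.lt_def.2 (by omega)) (Fin.le_def.2 (by omega))
      omega
    · simp only [mem_filter, mem_univ, true_and]
      omega
    · simp

lemma injOn_code :
    Set.InjOn code {P : Finpartition (univ : Finset (Fin n)) | IsNonCrossing P} :=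
  fun P hP Q hQ h => blockMin_injective <| funext fun m => Fin.ext <| by
    rw [← lastBelow_walk_code hP, ← lastBelow_walk_code hQ, h]

lemma exists_isNonCrossing_code_eq {a : Fin (n + 1) → ℕ} (ha : a ∈ lukasiewicz n) :
    ∃ P : Finpartition univ, IsNonCrossing P ∧ code P = a := by
  simp only [lukasiewicz, mem_filter, mem_piAntidiag, mem_univ, implies_true, and_true] at ha
  obtain ⟨hsum, hwalk⟩ := ha
  have hS {j : ℕ} (hj : j < n) : walk a 0 ≤ walk a (j + 1) := by
    rw [walk_zero]
    exact hwalk _ hj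
  obtain ⟨P, hP⟩ := exists_blockMin_eq
    (β := fun j : Fin n => ⟨lastBelow (walk a) j, lastBelow_le.trans_lt j.2⟩)
    (fun j => Fin.le_def.2 lastBelow_le) fun j => Fin.ext (lastBelow_lastBelow (hS j.2))
  have hP' (j : Fin n) : (blockMin P j : ℕ) = lastBelow (walk a) j := by rw [hP]
  have hle (i : Fin (n + 1)) : code P i ≤ a i := by
    calc code P i = #{j : Fin n | lastBelow (walk a) j = i} := by
          simp only [code, Fin.ext_iff, Fin.val_castSucc, hP']
      _ ≤ (walk a (i + 1) + 1 - walk a i).toNat := card_lastBelow_eq_le hS i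
      _ = a i := by
          rw [walk_succ, Fin.ofNat_val_eq_self]
          omega
  refine ⟨P, isNonCrossing_iff_blockMin.2 fun i j k m hij hjk hkm hik hjm => ?_,
    funext fun i => ?_⟩
  · rw [Fin.ext_iff, hP', hP'] at hik hjm ⊢
    exact lastBelow_eq_of_lt_of_lt_of_lt hij hjk hkm (hS k.2) (hS m.2) hik hjm
  · exact (sum_eq_sum_iff_of_le fun i _ => hle i).1 ((sum_code P).trans hsum.symm) i (mem_univ i)

lemma code_blockMin (m : Fin n) : code P (blockMin P m).castSucc = #(P.part m) := by
  simp [code, blockMin_eq_iff]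

lemma card_code_eq {l : ℕ} (hl : 1 ≤ l) :
    #{i | code P i = l} = #{B ∈ P.parts | #B = l} := by
  symm
  refine card_bij (fun B hB => (B.min' (P.nonempty_of_mem_parts (mem_filter.1 hB).1)).castSucc)
    (fun B hB => ?_) (fun B hB C hC h => ?_) fun i hi => ?_
  · obtain ⟨hB', rfl⟩ := mem_filter.1 hB
    obtain ⟨m, hm⟩ := P.nonempty_of_mem_parts hB'
    obtain rfl := P.part_eq_of_mem hB' hm
    exact mem_filter.2 ⟨mem_univ _, code_blockMin m⟩
  · have hB' := (mem_filter.1 hB).1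
    have hC' := (mem_filter.1 hC).1
    have hmem := B.min'_mem (P.nonempty_of_mem_parts hB')
    rw [Fin.castSucc_injective _ h] at hmem
    exact P.disjoint.elim_finset hB' hC' _ hmem (C.min'_mem _)
  · have hi' := (mem_filter.1 hi).2
    obtain ⟨m, hm⟩ := card_pos.1 (hi'.symm ▸ hl : 0 < code P i)
    obtain rfl := (mem_filter.1 hm).2
    exact ⟨P.part m, mem_filter.2 ⟨P.part_mem.2 (mem_univ m), by rw [← hi', code_blockMin]⟩, rfl⟩

variable (n) in
lemma sum_numBlocksOfSize_eq_sum_lukasiewicz {M : Type*} [AddCommMonoid M] {l : ℕ} (hl : 1 ≤ l)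
    (g : ℕ → M) :
    ∑ P : NCPart n, g (numBlocksOfSize l P) = ∑ a ∈ lukasiewicz n, g #{i | a i = l} :=
  sum_bij (fun P _ => code P.1) (fun P _ => code_mem_lukasiewicz P.1)
    (fun P _ Q _ h => Subtype.ext (injOn_code P.2 Q.2 h))
    (fun _ ha => let ⟨P, hP, hcode⟩ := exists_isNonCrossing_code_eq ha
      ⟨⟨P, hP⟩, mem_univ _, hcode⟩)
    fun P _ => by rw [card_code_eq hl, numBlocksOfSize]

end Code

section CycleLemma

/-- The rotation asked for starts at the first minimum of the path over one period. -/
lemma existsUnique_forall_le_add {S : ℕ → ℤ} {N : ℕ} (hN : 0 < N)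
    (hS : ∀ k, S (k + N) = S k - 1) :
    ∃! r, r < N ∧ ∀ k < N, S r ≤ S (r + k) := by
  obtain ⟨m, hmN, hm⟩ := exists_min_image (range N) S (nonempty_range_iff.2 hN.ne')
  have hex : ∃ r, r < N ∧ ∀ k ∈ range N, S r ≤ S k := ⟨m, mem_range.1 hmN, hm⟩
  classical
  obtain ⟨hrN, hmin⟩ := Nat.find_spec hex
  set r := Nat.find hex
  have hfirst {i : ℕ} (hi : i < r) : S r < S i := by
    by_contra! hle
    exact Nat.find_min hex hi ⟨hi.trans hrN, fun k hk => hle.trans (hmin k hk)⟩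
  refine ⟨r, ⟨hrN, fun k hk => ?_⟩, fun r' ⟨hr'N, hr'⟩ => ?_⟩
  · rcases lt_or_ge (r + k) N with hlt | hge
    · exact hmin _ (mem_range.2 hlt)
    · obtain ⟨i, hi⟩ := Nat.exists_eq_add_of_le' hge
      have := hfirst (i := i) (by omega)
      rw [hi, hS]
      omega
  · rcases lt_trichotomy r' r with hlt | heq | hlt
    · have := hfirst hlt
      have := hr' (r - r') (by omega)
      rw [Nat.add_sub_cancel' hlt.le] at this
      omega
    · exact heq
    · have := hmin r' (mem_range.2 hr'N)
      have := hr' (r + N - r') (by omega)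
      rw [Nat.add_sub_cancel' (by omega), hS] at this
      omega

variable {n : ℕ}

lemma walk_comp_add (a : Fin (n + 1) → ℕ) (r : Fin (n + 1)) (k : ℕ) :
    walk (fun i => a (i + r)) k = walk a (r + k) - walk a r := by
  rw [walk, walk, walk, sum_range_add, add_sub_cancel_left]
  refine sum_congr rfl fun j _ => ?_
  congr 3
  ext
  simp [Fin.val_add, add_comm]

lemma walk_add_period {a : Fin (n + 1) → ℕ} (ha : ∑ i, a i = n) (k : ℕ) :
    walk a (k + (n + 1)) = walk a k - 1 := by
  induction k with
  | zero =>
    rw [zero_add, walk_eq_sum_sub, sum_range_ofNat, ha, walk_zero]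
    push_cast
    ring
  | succ k ih =>
    have hk : Fin.ofNat (n + 1) (k + (n + 1)) = Fin.ofNat (n + 1) k := by simp [Fin.ext_iff]
    rw [add_right_comm, walk_succ, walk_succ, ih, hk]
    ring

lemma rotation_mem_lukasiewicz_iff {a : Fin (n + 1) → ℕ} (ha : ∑ i, a i = n) (r : Fin (n + 1)) :
    (fun i => a (i + r)) ∈ lukasiewicz n ↔ ∀ k < n + 1, walk a r ≤ walk a (r + k) := by
  have hsum : ∑ i, a (i + r) = n := (Equiv.sum_comp (Equiv.addRight r) a).trans ha
  simp [lukasiewicz, hsum, walk_comp_add]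

lemma existsUnique_rotation_mem_lukasiewicz {a : Fin (n + 1) → ℕ} (ha : ∑ i, a i = n) :
    ∃! r : Fin (n + 1), (fun i => a (i + r)) ∈ lukasiewicz n := by
  simp only [rotation_mem_lukasiewicz_iff ha]
  obtain ⟨r, ⟨hr, hmin⟩, huniq⟩ := existsUnique_forall_le_add n.succ_pos (walk_add_period ha)
  exact ⟨⟨r, hr⟩, hmin, fun r' hr' => Fin.ext (huniq r' ⟨r'.2, hr'⟩)⟩

lemma sum_rotation_mem_lukasiewicz {M : Type*} [AddCommMonoid M]
    (F : (Fin (n + 1) → ℕ) → M) (r : Fin (n + 1)) :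
    (∑ a ∈ piAntidiag univ n with (fun i => a (i + r)) ∈ lukasiewicz n, F (fun i => a (i + r))) =
      ∑ a ∈ lukasiewicz n, F a := by
  refine sum_bij' (fun a _ i => a (i + r)) (fun a _ i => a (i - r))
    (fun a ha => (mem_filter.1 ha).2) (fun a ha => ?_) (by simp) (by simp) fun _ _ => rfl
  have hsum : ∑ i, a (i - r) = n :=
    (Equiv.sum_comp (Equiv.subRight r) a).trans (mem_piAntidiag.1 (mem_filter.1 ha).1).1
  simpa [hsum] using ha

lemma sum_piAntidiag_eq_nsmul_sum_lukasiewicz {M : Type*} [AddCommMonoid M]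
    {F : (Fin (n + 1) → ℕ) → M} (hF : ∀ a r, F (fun i => a (i + r)) = F a) :
    ∑ a ∈ piAntidiag univ n, F a = (n + 1) • ∑ a ∈ lukasiewicz n, F a := by
  calc ∑ a ∈ piAntidiag univ n, F a
      = ∑ a ∈ piAntidiag univ n, ∑ r with (fun i => a (i + r)) ∈ lukasiewicz n,
          F (fun i => a (i + r)) := by
        refine sum_congr rfl fun a ha => ?_
        obtain ⟨r, hr, huniq⟩ := existsUnique_rotation_mem_lukasiewicz (mem_piAntidiag.1 ha).1
        rw [show ({r | (fun i => a (i + r)) ∈ lukasiewicz n} : Finset (Fin (n + 1))) = {r} by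
          ext r'
          simp only [mem_filter, mem_univ, true_and, mem_singleton]
          exact ⟨huniq r', fun h => h ▸ hr⟩]
        rw [sum_singleton, hF]
    _ = ∑ r, ∑ a ∈ piAntidiag univ n with (fun i => a (i + r)) ∈ lukasiewicz n,
          F (fun i => a (i + r)) := by
        simp only [sum_filter]
        exact sum_comm
    _ = (n + 1) • ∑ a ∈ lukasiewicz n, F a := by
        simp only [sum_rotation_mem_lukasiewicz, sum_const, card_univ, Fintype.card_fin]

variable (n) in
lemma nsmul_sum_numBlocksOfSize {M : Type*} [AddCommMonoid M] {l : ℕ} (hl : 1 ≤ l) (g : ℕ → M) :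
    (n + 1) • ∑ P : NCPart n, g (numBlocksOfSize l P) =
      ∑ a ∈ piAntidiag (univ : Finset (Fin (n + 1))) n, g #{i | a i = l} := by
  rw [sum_numBlocksOfSize_eq_sum_lukasiewicz n hl, sum_piAntidiag_eq_nsmul_sum_lukasiewicz]
  intro a r
  congr 1
  exact card_equiv (Equiv.addRight r) (by simp)

end CycleLemma

section FactorialMoments

variable {ι : Type*} [DecidableEq ι]

lemma card_piAntidiag_nat (s : Finset ι) (n : ℕ) : #(piAntidiag s n) = (#s).multichoose n := by
  rw [← card_finsuppAntidiag_nat_eq_multichoose, finsuppAntidiag, card_map, card_attach]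

variable [Fintype ι]

lemma card_filter_forall_mem_eq_piAntidiag (s : Finset ι) {n l : ℕ} (h : #s * l ≤ n) :
    #{a ∈ piAntidiag (univ : Finset ι) n | ∀ i ∈ s, a i = l} =
      #(piAntidiag sᶜ (n - #s * l)) := by
  have hsum (a b : ι → ℕ) : ∑ i, s.piecewise a b i = ∑ i ∈ s, a i + ∑ i ∈ sᶜ, b i := by
    rw [sum_piecewise, univ_inter, compl_eq_univ_sdiff]
  refine card_nbij' (fun a => s.piecewise 0 a) (fun b => s.piecewise (fun _ => l) b)
    (fun a ha => ?_) (fun b hb => ?_) (fun a ha => ?_) fun b hb => ?_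
  · simp only [coe_filter, mem_piAntidiag, mem_univ, implies_true, and_true,
      Set.mem_ofPred_eq] at ha
    have hadd := sum_add_sum_compl s a
    rw [ha.1, sum_congr rfl ha.2, sum_const, smul_eq_mul] at hadd
    have hcompl : ∑ i ∈ sᶜ, s.piecewise (0 : ι → ℕ) a i = ∑ i ∈ sᶜ, a i :=
      sum_congr rfl fun i hi => piecewise_eq_of_notMem _ _ _ (mem_compl.1 hi)
    simp only [mem_coe, mem_piAntidiag, mem_compl]
    exact ⟨hcompl.trans (by omega), fun i hi his => hi (piecewise_eq_of_mem _ _ _ his)⟩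
  · simp only [mem_coe, mem_piAntidiag] at hb
    simp only [coe_filter, mem_piAntidiag, mem_univ, implies_true, and_true, Set.mem_ofPred_eq]
    refine ⟨?_, fun i hi => piecewise_eq_of_mem _ _ _ hi⟩
    rw [hsum, sum_const, smul_eq_mul, hb.1]
    omega
  · ext i
    by_cases hi : i ∈ s
    · simp [hi, ((mem_filter.1 ha).2 i hi)]
    · simp [hi]
  · ext i
    by_cases hi : i ∈ s
    · simp only [hi, piecewise_eq_of_mem, Pi.zero_apply]
      by_contra hne
      exact mem_compl.1 ((mem_piAntidiag.1 hb).2 i (Ne.symm hne)) hi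
    · simp [hi]

variable (ι) in
/-- Double counting of the pairs of a sequence `a` and an `r`-set of positions at which `a` takes
the value `l`. -/
lemma sum_choose_card_eq {n l r : ℕ} (h : r * l ≤ n) :
    ∑ a ∈ piAntidiag (univ : Finset ι) n, (#{i | a i = l}).choose r =
      (Fintype.card ι).choose r * (Fintype.card ι - r).multichoose (n - r * l) := by
  calc ∑ a ∈ piAntidiag univ n, (#{i | a i = l}).choose r
      = ∑ a ∈ piAntidiag univ n, #{s ∈ powersetCard r univ | ∀ i ∈ s, a i = l} := by
        refine sum_congr rfl fun a _ => ?_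
        rw [← card_powersetCard]
        congr 1
        ext
        simp [mem_powersetCard, subset_iff, and_comm]
    _ = ∑ s ∈ powersetCard r univ, #{a ∈ piAntidiag univ n | ∀ i ∈ s, a i = l} :=
        sum_card_bipartiteAbove_eq_sum_card_bipartiteBelow _
    _ = ∑ _ ∈ powersetCard r (univ : Finset ι), (Fintype.card ι - r).multichoose (n - r * l) := by
        refine sum_congr rfl fun s hs => ?_
        obtain ⟨-, rfl⟩ := mem_powersetCard.1 hs
        rw [card_filter_forall_mem_eq_piAntidiag s h, card_piAntidiag_nat, card_compl]
    _ = _ := by rw [sum_const, card_powersetCard, smul_eq_mul, card_univ]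

lemma succ_mul_sum_choose_numBlocksOfSize {n l r : ℕ} (hl : 1 ≤ l) (hr : r * l ≤ n) :
    (n + 1) * ∑ P : NCPart n, (numBlocksOfSize l P).choose r =
      (n + 1).choose r * (n - r + (n - r * l)).choose (n - r) := by
  have hrn : r ≤ n := (Nat.le_mul_of_pos_right r hl).trans hr
  have h := (nsmul_sum_numBlocksOfSize n hl (·.choose r)).trans
    (sum_choose_card_eq (Fin (n + 1)) hr)
  rw [smul_eq_mul, Fintype.card_fin, Nat.multichoose_eq] at h
  rw [h, show n + 1 - r + (n - r * l) - 1 = n - r + (n - r * l) by omega, Nat.choose_symm_add]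

end FactorialMoments

section Expansion

/-- The first-order expansion `f n = c + a / n + o(1 / n)`. -/
def HasExpansion (f : ℕ → ℝ) (c a : ℝ) : Prop :=
  Tendsto (fun n : ℕ => n * (f n - c)) atTop (𝓝 a)

namespace HasExpansion

variable {f g : ℕ → ℝ} {c d a b : ℝ}

lemma tendsto (h : HasExpansion f c a) : Tendsto f atTop (𝓝 c) := by
  have hlim := (Tendsto.mul h tendsto_inv_atTop_nhds_zero_nat).add_const c
  rw [mul_zero, zero_add] at hlim
  refine hlim.congr' ?_
  filter_upwards [eventually_ne_atTop 0] with n hn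
  field_simp
  ring

lemma congr' (h : HasExpansion f c a) (hfg : f =ᶠ[atTop] g) : HasExpansion g c a :=
  Tendsto.congr' (hfg.mono fun n hn => by rw [hn]) h

lemma const (c : ℝ) : HasExpansion (fun _ => c) c 0 := by
  simp [HasExpansion]

lemma sub (hf : HasExpansion f c a) (hg : HasExpansion g d b) :
    HasExpansion (fun n => f n - g n) (c - d) (a - b) :=
  (Tendsto.sub hf hg).congr fun n => by ring

lemma mul (hf : HasExpansion f c a) (hg : HasExpansion g d b) :
    HasExpansion (fun n => f n * g n) (c * d) (a * d + c * b) :=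
  ((Tendsto.mul hf hg.tendsto).add (Tendsto.const_mul c hg)).congr fun n => by ring

lemma div (hf : HasExpansion f c a) (hg : HasExpansion g d b) (hd : d ≠ 0) :
    HasExpansion (fun n => f n / g n) (c / d) ((a - c / d * b) / d) := by
  refine ((Tendsto.sub hf (Tendsto.const_mul (c / d) hg)).div hg.tendsto hd).congr' ?_
  filter_upwards [hg.tendsto.eventually_ne hd] with n hn
  simp only [Pi.div_apply]
  field_simp
  ring

end HasExpansion

lemma hasExpansion_descFactorial {b : ℕ} (hb : b ≠ 0) (r : ℕ) :
    HasExpansion (fun n => ((b * n).descFactorial r : ℝ) / (b * n : ℝ) ^ r) 1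
      (-(r * (r - 1)) / (2 * b)) := by
  induction r with
  | zero => simpa using HasExpansion.const 1
  | succ r ih =>
    have hb' : (b : ℝ) ≠ 0 := Nat.cast_ne_zero.2 hb
    have hfactor : HasExpansion (fun n => 1 - r / (b * n : ℝ)) 1 (-(r / b)) := by
      refine tendsto_const_nhds.congr' ?_
      filter_upwards [eventually_ne_atTop 0] with n hn
      field_simp
      ring
    convert (ih.mul hfactor).congr' (g := fun n =>
      ((b * n).descFactorial (r + 1) : ℝ) / (b * n : ℝ) ^ (r + 1)) ?_ using 1
    · ring
    · push_cast
      field_simp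
      ring
    · filter_upwards [eventually_ge_atTop r, eventually_ne_atTop 0] with n hrn hn
      rw [Nat.descFactorial_succ, Nat.cast_mul,
        Nat.cast_sub (hrn.trans (Nat.le_mul_of_pos_left n (Nat.pos_of_ne_zero hb)))]
      push_cast
      field_simp
      ring

end Expansion

section Moments

/-- The probability that a uniform lattice path with `n` up-steps and `n` down-steps starts with
`r` given up-steps and `m` given down-steps. -/
noncomputable def pathRatio (r m n : ℕ) : ℝ :=
  (n - r + (n - m)).choose (n - r) / (n + n).choose n

lemma choose_mul_descFactorial {r m n : ℕ} (hr : r ≤ n) (hm : m ≤ n) :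
    (n - r + (n - m)).choose (n - r) * (2 * n).descFactorial (r + m) =
      (n + n).choose n * (n.descFactorial r * n.descFactorial m) := by
  have hpath := Nat.add_choose_mul_factorial_mul_factorial (n - r) (n - m)
  rw [← Nat.choose_symm_add] at hpath
  have hcentral := Nat.add_choose_mul_factorial_mul_factorial n n
  have hdesc := Nat.factorial_mul_descFactorial (show r + m ≤ 2 * n by omega)
  rw [show 2 * n - (r + m) = n - r + (n - m) by omega, two_mul, ← hpath, ← hcentral] at hdesc
  refine Nat.eq_of_mul_eq_mul_left
    (mul_pos (Nat.factorial_pos (n - r)) (Nat.factorial_pos (n - m))) ?_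
  rw [two_mul]
  linear_combination hdesc - (n + n).choose n * (n - m).factorial * n.descFactorial m *
    Nat.factorial_mul_descFactorial hr -
    (n + n).choose n * n.factorial * Nat.factorial_mul_descFactorial hm

lemma hasExpansion_pathRatio (r m : ℕ) :
    HasExpansion (pathRatio r m) ((1 / 2) ^ (r + m)) ((1 / 2) ^ (r + m) *
      ((r + m) * (r + m - 1) / 4 - r * (r - 1) / 2 - m * (m - 1) / 2)) := by
  have hnum := (hasExpansion_descFactorial one_ne_zero r).mul
    (hasExpansion_descFactorial one_ne_zero m)
  have hdiv := hnum.div (hasExpansion_descFactorial two_ne_zero (r + m)) (by norm_num)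
  convert ((HasExpansion.const ((1 / 2) ^ (r + m))).mul hdiv).congr' (g := pathRatio r m) ?_ using 1
  · ring
  · push_cast
    ring
  · filter_upwards [eventually_ge_atTop r, eventually_ge_atTop m, eventually_ne_atTop 0]
      with n hr hm hn
    have h := congrArg (Nat.cast (R := ℝ)) (choose_mul_descFactorial hr hm)
    have hchoose : ((n + n).choose n : ℝ) ≠ 0 := by
      exact_mod_cast (Nat.choose_pos (Nat.le_add_left n n)).ne'
    have hdesc : ((2 * n).descFactorial (r + m) : ℝ) ≠ 0 := by
      exact_mod_cast (Nat.descFactorial_pos.2 (by omega)).ne'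
    push_cast at h
    rw [pathRatio, eq_div_of_mul_eq hdesc h]
    simp only [Nat.cast_one, Nat.cast_ofNat, one_mul]
    rw [mul_pow, pow_add (n : ℝ), one_div_pow]
    field_simp

lemma succ_mul_card_ncPart (n : ℕ) : (n + 1) * Fintype.card (NCPart n) = (n + n).choose n := by
  simpa using succ_mul_sum_choose_numBlocksOfSize (n := n) (r := 0) le_rfl (by omega)

instance (n : ℕ) : Nonempty (NCPart n) := by
  refine Fintype.card_pos_iff.1 (Nat.pos_of_ne_zero fun h => ?_)
  have hcard := succ_mul_card_ncPart n
  rw [h, mul_zero] at hcard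
  exact (Nat.choose_pos (Nat.le_add_left n n)).ne hcard

variable {l : ℕ}

lemma sum_choose_numBlocksOfSize_div_card {n r : ℕ} (hl : 1 ≤ l) (hr : r * l ≤ n) :
    (∑ P : NCPart n, ((numBlocksOfSize l P).choose r : ℝ)) / Fintype.card (NCPart n) =
      (n + 1).choose r * pathRatio r (r * l) n := by
  have hsum := congrArg (Nat.cast (R := ℝ)) (succ_mul_sum_choose_numBlocksOfSize hl hr)
  have hcard := congrArg (Nat.cast (R := ℝ)) (succ_mul_card_ncPart n)
  push_cast at hsum hcard
  rw [pathRatio, ← mul_div_assoc, ← hsum, ← hcard,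
    mul_div_mul_left _ _ (Nat.cast_add_one_ne_zero n)]

lemma meanBlocksOfSize_eq {n : ℕ} (hl : 1 ≤ l) (hn : l ≤ n) :
    meanBlocksOfSize l n = (n + 1) * pathRatio 1 l n := by
  simpa [meanBlocksOfSize] using
    sum_choose_numBlocksOfSize_div_card (r := 1) hl (by rwa [one_mul])

lemma varBlocksOfSize_eq {n : ℕ} (hl : 1 ≤ l) (hn : 2 * l ≤ n) :
    varBlocksOfSize l n = (n + 1) * n * pathRatio 2 (2 * l) n + (n + 1) * pathRatio 1 l n -
      ((n + 1) * pathRatio 1 l n) ^ 2 := by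
  have hsq : ∑ P : NCPart n, (numBlocksOfSize l P : ℝ) ^ 2 =
      2 * ∑ P : NCPart n, ((numBlocksOfSize l P).choose 2 : ℝ) +
        ∑ P : NCPart n, (numBlocksOfSize l P : ℝ) := by
    rw [mul_sum, ← sum_add_distrib]
    refine sum_congr rfl fun P _ => ?_
    rw [Nat.cast_choose_two]
    ring
  rw [varBlocksOfSize, hsq, add_div, mul_div_assoc, sum_choose_numBlocksOfSize_div_card hl hn,
    ← meanBlocksOfSize, meanBlocksOfSize_eq hl (by omega), Nat.cast_choose_two]
  push_cast
  ring

/-- The limit of the variance of the number of blocks of size `l` per element. With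
`p = 2 ^ -(l + 1)`, it is the residual variance of the indicator of `{l}` after linear regression on
the identity, under the geometric law with parameter `1 / 2`. -/
noncomputable def limitVariance (l : ℕ) : ℝ :=
  (1 / 2) ^ (l + 1) * (1 - (1 / 2) ^ (l + 1)) - ((1 / 2) ^ (l + 1) * (l - 1)) ^ 2 / 2

lemma limitVariance_pos (l : ℕ) : 0 < limitVariance l := by
  have hbound : 1 + ((l : ℝ) - 1) ^ 2 / 2 < 2 ^ (l + 1) := by
    induction l with
    | zero => norm_num
    | succ l ih =>
      have hpow : (l : ℝ) + 1 ≤ 2 ^ l := by exact_mod_cast Nat.lt_two_pow_self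
      rw [pow_succ (2 : ℝ)] at ih
      rw [pow_succ (2 : ℝ), pow_succ (2 : ℝ)]
      push_cast
      nlinarith [sq_nonneg ((l : ℝ) - 2)]
  have hfactor : limitVariance l =
      ((1 / 2) ^ (l + 1)) ^ 2 * (2 ^ (l + 1) - (1 + ((l : ℝ) - 1) ^ 2 / 2)) := by
    rw [limitVariance, one_div_pow]
    field_simp
    ring
  rw [hfactor]
  exact mul_pos (by positivity) (sub_pos.2 hbound)

lemma tendsto_meanBlocksOfSize (hl : 1 ≤ l) :
    Tendsto (fun n : ℕ => (meanBlocksOfSize l n - (n + 1) * (1 / 2) ^ (l + 1)) / √(n + 1))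
      atTop (𝓝 0) := by
  have hratio := hasExpansion_pathRatio 1 l
  have hsqrt : Tendsto (fun n : ℕ => √(n + 1)) atTop atTop :=
    Real.tendsto_sqrt_atTop.comp (tendsto_atTop_add_const_right _ _ tendsto_natCast_atTop_atTop)
  have hnum := Tendsto.add hratio (hratio.tendsto.sub_const ((1 / 2) ^ (1 + l)))
  refine (hnum.div_atTop hsqrt).congr' ?_
  filter_upwards [eventually_ge_atTop l] with n hn
  rw [meanBlocksOfSize_eq hl hn, add_comm 1 l]
  ring

lemma tendsto_varBlocksOfSize (hl : 1 ≤ l) :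
    Tendsto (fun n : ℕ => varBlocksOfSize l n / (n + 1)) atTop (𝓝 (limitVariance l)) := by
  have h₁ := hasExpansion_pathRatio 1 l
  have h₂ := hasExpansion_pathRatio 2 (2 * l)
  have hlim := (Tendsto.sub h₂ (h₁.mul h₁)).add (h₁.tendsto.sub (h₁.mul h₁).tendsto)
  convert hlim.congr' ?_ using 2
  · rw [limitVariance]
    push_cast
    ring
  · filter_upwards [eventually_ge_atTop (2 * l)] with n hn
    rw [varBlocksOfSize_eq hl hn, show 2 + 2 * l = 1 + l + (1 + l) by ring, pow_add _ (1 + l)]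
    field_simp
    ring

end Moments

section FourierInversion

open Complex Real

lemma integral_exp_int_mul_I (n : ℤ) :
    ∫ θ in -π..π, cexp (n * θ * I) = if n = 0 then (2 * π : ℂ) else 0 := by
  split_ifs with hn
  · simp only [hn, Int.cast_zero, zero_mul, Complex.exp_zero, intervalIntegral.integral_const,
      real_smul]
    push_cast
    ring
  · have hnI : (n : ℂ) * I ≠ 0 := mul_ne_zero (Int.cast_ne_zero.2 hn) I_ne_zero
    have hperiod : cexp (n * I * π) = cexp (n * I * (-π : ℝ)) :=
      exp_eq_exp_iff_exists_int.2 ⟨n, by push_cast; ring⟩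
    simp_rw [mul_right_comm]
    rw [integral_exp_mul_complex hnI, hperiod, sub_self, zero_div]

variable {Ω : Type*} [MeasurableSpace Ω] {P : Measure Ω} [SFinite P] {S : Ω → ℤ} {Y : Ω → ℂ}

lemma integral_integral_mul_exp_eq_setIntegral (hS : Measurable S) (hY : Integrable Y P) (b : ℤ) :
    ∫ θ in -π..π, (∫ ω, Y ω * cexp (S ω * θ * I) ∂P) * cexp (-(b * θ * I)) =
      2 * π * ∫ ω in {ω | S ω = b}, Y ω ∂P := by
  have hmeas : Measurable fun z : ℝ × Ω => cexp ((S z.2 - b : ℤ) * z.1 * I) := by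
    have hcast : Measurable fun z : ℝ × Ω => ((S z.2 - b : ℤ) : ℂ) :=
      (Measurable.of_discrete (f := fun k : ℤ => ((k - b : ℤ) : ℂ))).comp (hS.comp measurable_snd)
    fun_prop
  have hnorm (k : ℤ) (θ : ℝ) : ‖cexp (k * θ * I)‖ = 1 := by
    rw [← ofReal_intCast, ← ofReal_mul, norm_exp_ofReal_mul_I]
  have hint : Integrable (Function.uncurry fun (θ : ℝ) (ω : Ω) =>
      Y ω * cexp ((S ω - b : ℤ) * θ * I)) ((volume.restrict (Set.Ioc (-π) π)).prod P) :=
    (hY.comp_snd _).mul_bdd (c := 1) hmeas.aestronglyMeasurable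
      (.of_forall fun z => (hnorm _ z.1).le)
  calc ∫ θ in -π..π, (∫ ω, Y ω * cexp (S ω * θ * I) ∂P) * cexp (-(b * θ * I))
      = ∫ θ in Set.Ioc (-π) π, ∫ ω, Y ω * cexp ((S ω - b : ℤ) * θ * I) ∂P := by
        rw [intervalIntegral.integral_of_le (by linarith [pi_pos])]
        refine integral_congr_ae (.of_forall fun θ => ?_)
        dsimp only
        rw [← integral_mul_const]
        refine integral_congr_ae (.of_forall fun ω => ?_)
        dsimp only
        rw [mul_assoc, ← Complex.exp_add]
        push_cast
        ring_nf
    _ = ∫ ω, Y ω * (∫ θ in -π..π, cexp ((S ω - b : ℤ) * θ * I)) ∂P := by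
        rw [integral_integral_swap hint]
        simp_rw [integral_const_mul, intervalIntegral.integral_of_le (neg_le_self pi_pos.le)]
    _ = ∫ ω, {ω | S ω = b}.indicator (fun ω => 2 * π * Y ω) ω ∂P := by
        refine integral_congr_ae (.of_forall fun ω => ?_)
        dsimp only
        rw [integral_exp_int_mul_I]
        simp [sub_eq_zero, Set.indicator_apply, mul_comm]
    _ = 2 * π * ∫ ω in {ω | S ω = b}, Y ω ∂P := by
        rw [integral_indicator (measurableSet_eq_fun hS measurable_const), integral_const_mul]

end FourierInversion

section JointCharFun

open Complex Real

variable {E : Type*} [MeasurableSpace E] {μ : Measure E} [IsProbabilityMeasure μ] {f : E → ℝ}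
  {ξ : E → ℤ}

/-- The joint characteristic function `E[exp(i(tf + θξ))]` of a real random variable `f` and an
integer random variable `ξ`. -/
noncomputable def jointCharFun (μ : Measure E) (f : E → ℝ) (ξ : E → ℤ) (t θ : ℝ) : ℂ :=
  ∫ x, cexp ((t * f x + θ * ξ x : ℝ) * I) ∂μ

lemma integrable_exp_ofReal_mul_I {X : E → ℝ} (hX : Measurable X) :
    Integrable (fun x => cexp (X x * I)) μ :=
  (integrable_const (1 : ℝ)).mono' (by fun_prop) (by simp [norm_exp_ofReal_mul_I])

lemma continuous_jointCharFun (hf : Measurable f) (hξ : Measurable ξ) (t : ℝ) :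
    Continuous (jointCharFun μ f ξ t) := by
  have hcast : Measurable fun x => (ξ x : ℝ) := Measurable.of_discrete.comp hξ
  refine continuous_of_dominated (bound := fun _ => 1) (fun θ => ?_) (fun θ => ?_)
    (integrable_const 1) (.of_forall fun x => by fun_prop)
  · exact (integrable_exp_ofReal_mul_I (by fun_prop)).aestronglyMeasurable
  · exact .of_forall fun x => (norm_exp_ofReal_mul_I _).le

lemma jointCharFun_pow (N : ℕ) (t θ : ℝ) :
    jointCharFun μ f ξ t θ ^ N = ∫ a, cexp (t * (∑ i, f (a i) : ℝ) * I) *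
      cexp ((∑ i, ξ (a i) : ℤ) * θ * I) ∂Measure.pi fun _ : Fin N => μ := by
  have h := integral_fintype_prod_eq_pow (ι := Fin N) (μ := μ)
    fun x => cexp ((t * f x + θ * ξ x : ℝ) * I)
  rw [Fintype.card_fin] at h
  rw [jointCharFun, ← h]
  refine integral_congr_ae (.of_forall fun a => ?_)
  dsimp only
  rw [← Complex.exp_sum, ← Complex.exp_add]
  push_cast
  rw [← sum_mul, sum_add_distrib, ← mul_sum, ← mul_sum]
  ring_nf

lemma integral_jointCharFun_pow (hf : Measurable f) (hξ : Measurable ξ) (N : ℕ) (b : ℤ) (t : ℝ) :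
    ∫ θ in -π..π, jointCharFun μ f ξ t θ ^ N * cexp (-(b * θ * I)) =
      2 * π * ∫ a in {a | ∑ i, ξ (a i) = b}, cexp (t * (∑ i, f (a i) : ℝ) * I)
        ∂Measure.pi fun _ : Fin N => μ := by
  simp_rw [jointCharFun_pow]
  refine integral_integral_mul_exp_eq_setIntegral (by fun_prop) ?_ b
  simp_rw [← ofReal_mul]
  exact integrable_exp_ofReal_mul_I (by fun_prop)

lemma norm_integral_exp_mul_I_sq {X : E → ℝ} (hX : Measurable X) :
    ‖∫ x, cexp (X x * I) ∂μ‖ ^ 2 = ∫ z, Real.cos (X z.1 - X z.2) ∂μ.prod μ := by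
  have hprod : (‖∫ x, cexp (X x * I) ∂μ‖ ^ 2 : ℂ) =
      ∫ z, cexp ((X z.1 - X z.2 : ℝ) * I) ∂μ.prod μ := by
    rw [← mul_conj', ← integral_conj, ← integral_prod_mul]
    refine integral_congr_ae (.of_forall fun z => ?_)
    dsimp only
    rw [← exp_conj, ← Complex.exp_add, map_mul, conj_ofReal, conj_I]
    push_cast
    ring_nf
  have hre := congrArg re hprod
  rw [← ofReal_pow, ofReal_re] at hre
  rw [hre, ← reCLM_apply, ← reCLM.integral_comp_comm
    (integrable_exp_ofReal_mul_I (X := fun z : E × E => X z.1 - X z.2) (by fun_prop))]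
  simp only [reCLM_apply, exp_ofReal_mul_I_re]

/-- Two independent copies of `(f, ξ)` differ by exactly `(0, 1)` with the probability on the right;
on that event the phases of the two factors of `‖φ‖ ^ 2 = φ * conj φ` differ by `θ`. -/
lemma norm_jointCharFun_sq_le (hf : Measurable f) (hξ : Measurable ξ) (t θ : ℝ) :
    ‖jointCharFun μ f ξ t θ‖ ^ 2 ≤
      1 - (μ.prod μ).real {z | f z.1 = f z.2 ∧ ξ z.1 = ξ z.2 + 1} * (1 - Real.cos θ) := by
  set D := {z : E × E | f z.1 = f z.2 ∧ ξ z.1 = ξ z.2 + 1}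
  set X : E → ℝ := fun x => t * f x + θ * ξ x with hX_def
  have hX : Measurable X := by
    have hcast : Measurable fun x => (ξ x : ℝ) := Measurable.of_discrete.comp hξ
    fun_prop
  have hD : MeasurableSet D :=
    (measurableSet_eq_fun (by fun_prop) (by fun_prop)).inter
      (measurableSet_eq_fun (by fun_prop) (by fun_prop))
  have hcos : Integrable (fun z : E × E => Real.cos (X z.1 - X z.2)) (μ.prod μ) :=
    (integrable_const (1 : ℝ)).mono' (by fun_prop) (.of_forall fun z => Real.abs_cos_le_one _)
  have hsq : ‖jointCharFun μ f ξ t θ‖ ^ 2 = ∫ z, Real.cos (X z.1 - X z.2) ∂μ.prod μ :=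
    norm_integral_exp_mul_I_sq hX
  have hle : ∫ z in D, (1 - Real.cos (X z.1 - X z.2)) ∂μ.prod μ ≤
      ∫ z, (1 - Real.cos (X z.1 - X z.2)) ∂μ.prod μ :=
    setIntegral_le_integral ((integrable_const 1).sub hcos)
      (.of_forall fun z => sub_nonneg.2 (Real.cos_le_one _))
  have hconst : ∫ z in D, (1 - Real.cos (X z.1 - X z.2)) ∂μ.prod μ =
      (μ.prod μ).real D * (1 - Real.cos θ) := by
    rw [← smul_eq_mul, ← setIntegral_const]
    refine setIntegral_congr_fun hD fun z hz => ?_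
    simp only [hX_def, hz.1, hz.2]
    push_cast
    ring_nf
  rw [integral_sub (integrable_const 1) hcos, ← hsq, hconst] at hle
  simp only [integral_const, probReal_univ, smul_eq_mul, mul_one] at hle
  linarith

lemma norm_jointCharFun_le (hf : Measurable f) (hξ : Measurable ξ) (t : ℝ) {θ : ℝ} (hθ : |θ| ≤ π) :
    ‖jointCharFun μ f ξ t θ‖ ≤ Real.exp
      (-((μ.prod μ).real {z | f z.1 = f z.2 ∧ ξ z.1 = ξ z.2 + 1} / π ^ 2) * θ ^ 2) := by
  refine (pow_le_pow_iff_left₀ (norm_nonneg _) (Real.exp_nonneg _) two_ne_zero).1 ?_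
  rw [← Real.exp_nat_mul]
  refine ((norm_jointCharFun_sq_le hf hξ t θ).trans ?_).trans (Real.add_one_le_exp _)
  have hmul := mul_le_mul_of_nonneg_left (cos_le_one_sub_mul_cos_sq hθ)
    (measureReal_nonneg (μ := μ.prod μ) (s := {z | f z.1 = f z.2 ∧ ξ z.1 = ξ z.2 + 1}))
  push_cast
  linear_combination hmul

end JointCharFun

section ConditionedCLT

open Complex Real

variable {E : Type*} [MeasurableSpace E] {μ : Measure E} [IsProbabilityMeasure μ]

lemma tendsto_integral_exp_div_sqrt_pow {X : E → ℝ} (hX : MemLp X 2 μ) (hX0 : μ[X] = 0) :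
    Tendsto (fun n : ℕ => (∫ x, cexp ((X x / √n : ℝ) * I) ∂μ) ^ n) atTop
      (𝓝 (cexp (-Var[X; μ] / 2))) := by
  rcases eq_or_ne Var[X; μ] 0 with hvar | hvar
  · have hone (n : ℕ) : ∫ x, cexp ((X x / √n : ℝ) * I) ∂μ = 1 := by
      have hae : (fun x => cexp ((X x / √n : ℝ) * I)) =ᵐ[μ] fun _ => 1 := by
        filter_upwards [ae_eq_integral_of_variance_eq_zero hX hvar] with x hx
        simp [hx, hX0]
      rw [integral_congr_ae hae]
      simp
    simp_rw [hone]
    simp [hvar]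
  · set v := Var[X; μ]
    have hv0 : 0 < v := (variance_nonneg X μ).lt_of_ne' hvar
    have hsqrt : √v ≠ 0 := (Real.sqrt_pos.2 hv0).ne'
    have hclt := tendsto_charFun_inv_sqrt_mul_pow (P := μ) (X := fun x => X x / √v)
      (hX.aemeasurable.div_const _) (by rw [integral_div, hX0, zero_div])
      (by simp only [Pi.pow_def, div_pow]
          rw [integral_div, Real.sq_sqrt hv0.le,
            ← variance_of_integral_eq_zero hX.aemeasurable hX0, div_self hvar]) √v
    rw [← ofReal_pow, Real.sq_sqrt hv0.le] at hclt
    refine hclt.congr fun n => ?_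
    rw [charFun_apply_real, integral_map (hX.aemeasurable.div_const _) (by fun_prop)]
    congr 2 with x
    rw [← ofReal_mul]
    congr 3
    field_simp

variable {f : E → ℝ} {ξ : E → ℤ} {b : ℕ → ℤ}

/-- The integrand of the inversion formula for `jointCharFun`, at `(t, s) / √N` and for the event
that the `N`-fold sum of `ξ` is `b`. -/
noncomputable def rescaledIntegrand (μ : Measure E) (f : E → ℝ) (ξ : E → ℤ) (t : ℝ) (N : ℕ) (b : ℤ)
    (s : ℝ) : ℂ :=
  jointCharFun μ f ξ (t / √N) (s / √N) ^ N * cexp (-(b * (s / √N : ℝ) * I))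

lemma tendsto_rescaledIntegrand (hf : MemLp f 2 μ) (hf0 : μ[f] = 0)
    (hξ : MemLp (fun x => (ξ x : ℝ)) 2 μ)
    (hb : Tendsto (fun N : ℕ => (b N - N * ∫ x, (ξ x : ℝ) ∂μ) / √N) atTop (𝓝 0)) (t s : ℝ) :
    Tendsto (fun N => rescaledIntegrand μ f ξ t N (b N) s) atTop
      (𝓝 (cexp (-Var[fun x => t * f x + s * ξ x; μ] / 2))) := by
  set m := ∫ x, (ξ x : ℝ) ∂μ with hm
  have hfs : MemLp (fun x => t * f x + s * ξ x) 2 μ := (hf.const_mul t).add (hξ.const_mul s)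
  have hX : MemLp (fun x => t * f x + s * ξ x - s * m) 2 μ := hfs.sub (memLp_const _)
  have hX0 : ∫ x, (t * f x + s * ξ x - s * m) ∂μ = 0 := by
    have hf1 := hf.integrable one_le_two
    have hξ1 := hξ.integrable one_le_two
    rw [integral_sub (hfs.integrable one_le_two) (integrable_const _),
      integral_add (hf1.const_mul t) (hξ1.const_mul s), integral_const_mul, integral_const_mul,
      hf0, ← hm]
    simp
  have hphase : Tendsto (fun N : ℕ => cexp (-((b N - N * m) / √N * s : ℝ) * I)) atTop (𝓝 1) := by
    have hcont : Continuous fun y : ℝ => cexp (-(y * s : ℝ) * I) := by fun_prop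
    have h := (hcont.tendsto 0).comp hb
    simp only [zero_mul, neg_zero, ofReal_zero, Complex.exp_zero] at h
    exact h
  have hlim := (tendsto_integral_exp_div_sqrt_pow hX hX0).mul hphase
  rw [variance_sub_const hfs.aestronglyMeasurable, mul_one] at hlim
  refine hlim.congr fun N => ?_
  have hcenter : ∫ x, cexp (((t * f x + s * ξ x - s * m) / √N : ℝ) * I) ∂μ =
      jointCharFun μ f ξ (t / √N) (s / √N) * cexp (-(s * m / √N : ℝ) * I) := by
    rw [jointCharFun, ← integral_mul_const]
    congr 1 with x
    rw [← Complex.exp_add]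
    push_cast
    ring_nf
  rw [hcenter, rescaledIntegrand, mul_pow, mul_assoc, ← Complex.exp_nat_mul, ← Complex.exp_add]
  push_cast
  ring_nf

lemma norm_rescaledIntegrand_le (hf : Measurable f) (hξ : Measurable ξ) (t : ℝ) {N : ℕ}
    (hN : N ≠ 0) (b : ℤ) {s : ℝ} (hs : |s| ≤ π * √N) :
    ‖rescaledIntegrand μ f ξ t N b s‖ ≤ Real.exp
      (-((μ.prod μ).real {z | f z.1 = f z.2 ∧ ξ z.1 = ξ z.2 + 1} / π ^ 2) * s ^ 2) := by
  have hsqrt : 0 < √(N : ℝ) := by positivity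
  have hphase : ‖cexp (-(b * (s / √N : ℝ) * I))‖ = 1 := by
    rw [← ofReal_intCast, ← ofReal_mul, ← neg_mul, ← ofReal_neg, norm_exp_ofReal_mul_I]
  have hbound := norm_jointCharFun_le (μ := μ) hf hξ (t / √N) (θ := s / √N)
    (by rwa [abs_div, abs_of_pos hsqrt, div_le_iff₀ hsqrt])
  rw [rescaledIntegrand, norm_mul, hphase, mul_one, norm_pow]
  refine (pow_le_pow_left₀ (norm_nonneg _) hbound N).trans_eq ?_
  rw [← Real.exp_nat_mul, div_pow s, Real.sq_sqrt (Nat.cast_nonneg N)]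
  field_simp

omit [IsProbabilityMeasure μ] in
lemma sqrt_mul_integral_jointCharFun_pow {N : ℕ} (hN : N ≠ 0) (b : ℤ) (t : ℝ) :
    √N * ∫ θ in -π..π, jointCharFun μ f ξ (t / √N) θ ^ N * cexp (-(b * θ * I)) =
      ∫ s, (Set.Ioc (-(π * √N)) (π * √N)).indicator (rescaledIntegrand μ f ξ t N b) s := by
  have hsqrt : 0 < √(N : ℝ) := by positivity
  rw [integral_indicator measurableSet_Ioc,
    ← intervalIntegral.integral_of_le (neg_le_self (by positivity))]
  simp only [rescaledIntegrand]
  rw [intervalIntegral.integral_comp_div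
    (fun θ : ℝ => jointCharFun μ f ξ (t / √N) θ ^ N * cexp (-(b * θ * I))) hsqrt.ne', neg_div,
    mul_div_assoc, div_self hsqrt.ne', mul_one, real_smul]

lemma tendsto_sqrt_mul_integral_jointCharFun_pow (hf : Measurable f) (hf2 : MemLp f 2 μ)
    (hf0 : μ[f] = 0) (hξ : Measurable ξ) (hξ2 : MemLp (fun x => (ξ x : ℝ)) 2 μ)
    (hD : (μ.prod μ) {z | f z.1 = f z.2 ∧ ξ z.1 = ξ z.2 + 1} ≠ 0)
    (hb : Tendsto (fun N : ℕ => (b N - N * ∫ x, (ξ x : ℝ) ∂μ) / √N) atTop (𝓝 0)) (t : ℝ) :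
    Tendsto (fun N : ℕ => √N *
        ∫ θ in -π..π, jointCharFun μ f ξ (t / √N) θ ^ N * cexp (-(b N * θ * I))) atTop
      (𝓝 (∫ s : ℝ, cexp (-Var[fun x => t * f x + s * ξ x; μ] / 2))) := by
  have hsqrt : Tendsto (fun N : ℕ => √(N : ℝ)) atTop atTop :=
    Real.tendsto_sqrt_atTop.comp tendsto_natCast_atTop_atTop
  have hq : 0 < (μ.prod μ).real {z | f z.1 = f z.2 ∧ ξ z.1 = ξ z.2 + 1} / π ^ 2 :=
    div_pos (ENNReal.toReal_pos hD (measure_ne_top _ _)) (by positivity)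
  have hcont (N : ℕ) : Continuous (rescaledIntegrand μ f ξ t N (b N)) := by
    have := continuous_jointCharFun (μ := μ) hf hξ (t / √N)
    unfold rescaledIntegrand
    fun_prop
  refine Tendsto.congr' (f₁ := fun N : ℕ => ∫ s, (Set.Ioc (-(π * √N)) (π * √N)).indicator
    (rescaledIntegrand μ f ξ t N (b N)) s) ?_ ?_
  · filter_upwards [eventually_ne_atTop 0] with N hN
    rw [sqrt_mul_integral_jointCharFun_pow hN]
  refine tendsto_integral_filter_of_dominated_convergence _
    (.of_forall fun N => (hcont N).aestronglyMeasurable.indicator measurableSet_Ioc) ?_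
    (integrable_exp_neg_mul_sq hq) (.of_forall fun s => ?_)
  · filter_upwards [eventually_ne_atTop 0] with N hN
    refine .of_forall fun s => ?_
    rw [Set.indicator_apply]
    split_ifs with hs
    · exact norm_rescaledIntegrand_le hf hξ t hN (b N) (abs_le.2 ⟨hs.1.le, hs.2⟩)
    · simpa using (Real.exp_pos _).le
  · refine (tendsto_rescaledIntegrand hf2 hf0 hξ2 hb t s).congr' ?_
    filter_upwards [hsqrt.eventually_gt_atTop (|s| / π)] with N hN
    rw [div_lt_iff₀' pi_pos, abs_lt] at hN
    rw [Set.indicator_of_mem (Set.mem_Ioc.2 ⟨hN.1, hN.2.le⟩)]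

/-- The variance of the residual of `X` after linear regression on `Y`. -/
noncomputable def residualVariance (X Y : E → ℝ) (μ : Measure E) : ℝ :=
  Var[X; μ] - cov[X, Y; μ] ^ 2 / Var[Y; μ]

lemma integral_exp_neg_variance {X Y : E → ℝ} (hX : MemLp X 2 μ) (hY : MemLp Y 2 μ)
    (hVar : Var[Y; μ] ≠ 0) (t : ℝ) :
    ∫ s : ℝ, cexp (-Var[fun x => t * X x + s * Y x; μ] / 2) =
      cexp (-(residualVariance X Y μ * t ^ 2) / 2) * √(2 * π / Var[Y; μ]) := by
  have hsquare (s : ℝ) : cexp (-Var[fun x => t * X x + s * Y x; μ] / 2) =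
      cexp (-(residualVariance X Y μ * t ^ 2) / 2) *
        (Real.exp (-(Var[Y; μ] / 2) * (s + t * cov[X, Y; μ] / Var[Y; μ]) ^ 2) : ℝ) := by
    rw [variance_fun_add (hX.const_mul t) (hY.const_mul s), variance_const_mul, variance_const_mul,
      covariance_const_mul_left, covariance_const_mul_right, ofReal_exp, ← Complex.exp_add,
      residualVariance]
    congr 1
    push_cast
    have : (Var[Y; μ] : ℂ) ≠ 0 := ofReal_ne_zero.2 hVar
    field_simp
    ring
  simp_rw [hsquare]
  rw [integral_const_mul, integral_complex_ofReal, integral_add_right_eq_self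
    (fun s : ℝ => Real.exp (-(Var[Y; μ] / 2) * s ^ 2)), integral_gaussian]
  congr 3
  field_simp

lemma variance_ne_zero_of_prod_ne_zero (hξ2 : MemLp (fun x => (ξ x : ℝ)) 2 μ)
    (hD : (μ.prod μ) {z | ξ z.1 = ξ z.2 + 1} ≠ 0) : Var[fun x => (ξ x : ℝ); μ] ≠ 0 := by
  intro hvar
  have hae := ae_eq_integral_of_variance_eq_zero hξ2 hvar
  refine hD (measure_mono_null (fun z hz => ?_) (ae_iff.1
    ((Measure.quasiMeasurePreserving_fst.ae hae).and (Measure.quasiMeasurePreserving_snd.ae hae))))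
  rintro ⟨h₁, h₂⟩
  have hz' : (ξ z.1 : ℝ) = ξ z.2 + 1 := by exact_mod_cast hz
  linarith

/-- Gnedenko's local limit theorem, weighted by a second variable: numerator and denominator are
the same Fourier integral, at `t` and at `0`. -/
theorem tendsto_setIntegral_exp_div_sqrt (hf : Measurable f) (hf2 : MemLp f 2 μ)
    (hf0 : μ[f] = 0) (hξ : Measurable ξ) (hξ2 : MemLp (fun x => (ξ x : ℝ)) 2 μ)
    (hD : (μ.prod μ) {z | f z.1 = f z.2 ∧ ξ z.1 = ξ z.2 + 1} ≠ 0)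
    (hb : Tendsto (fun N : ℕ => (b N - N * ∫ x, (ξ x : ℝ) ∂μ) / √N) atTop (𝓝 0)) (t : ℝ) :
    Tendsto (fun N : ℕ =>
        (∫ a in {a | ∑ i, ξ (a i) = b N}, cexp ((t * ((∑ i, f (a i)) / √N) : ℝ) * I)
          ∂Measure.pi fun _ : Fin N => μ) /
        (Measure.pi fun _ : Fin N => μ).real {a | ∑ i, ξ (a i) = b N}) atTop
      (𝓝 (cexp (-(residualVariance f (fun x => (ξ x : ℝ)) μ * t ^ 2) / 2))) := by
  have hVar := variance_ne_zero_of_prod_ne_zero hξ2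
    fun h => hD (measure_mono_null (fun _ hz => hz.2) h)
  have hlim (t : ℝ) := tendsto_sqrt_mul_integral_jointCharFun_pow hf hf2 hf0 hξ hξ2 hD hb t
  simp_rw [integral_exp_neg_variance hf2 hξ2 hVar, integral_jointCharFun_pow hf hξ] at hlim
  have hsqrt : ((√(2 * π / Var[fun x => (ξ x : ℝ); μ]) : ℝ) : ℂ) ≠ 0 := by
    have := (variance_nonneg (fun x => (ξ x : ℝ)) μ).lt_of_ne' hVar
    exact ofReal_ne_zero.2 (by positivity)
  have hratio := (hlim t).div (hlim 0) (by simpa using hsqrt)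
  simp only [ne_eq, OfNat.ofNat_ne_zero, not_false_eq_true, zero_pow, ofReal_zero, mul_zero,
    neg_zero, zero_div, Complex.exp_zero, one_mul, mul_div_cancel_right₀ _ hsqrt] at hratio
  refine hratio.congr' ?_
  filter_upwards [eventually_ne_atTop 0] with N hN
  have hsqrtN : ((√(N : ℝ) : ℝ) : ℂ) ≠ 0 := ofReal_ne_zero.2 (by positivity)
  have htwopi : (2 * π : ℂ) ≠ 0 := mul_ne_zero two_ne_zero (ofReal_ne_zero.2 pi_ne_zero)
  simp only [Pi.div_apply]
  rw [mul_div_mul_left _ _ hsqrtN, mul_div_mul_left _ _ htwopi]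
  simp only [zero_mul, Complex.exp_zero, setIntegral_const, real_smul, mul_one]
  congr 3 with a
  push_cast
  ring_nf

end ConditionedCLT

section GeometricLaw

variable {p : unitInterval}

lemma norm_one_sub_coe_lt_one (hp : p ≠ 0) : ‖(1 - p : ℝ)‖ < 1 := by
  rw [Real.norm_of_nonneg (sub_nonneg.2 p.2.2)]
  exact sub_lt_self 1 (unitInterval.pos_iff_ne_zero.2 hp)

lemma integrable_choose_geometricMeasure (hp : p ≠ 0) (k : ℕ) :
    Integrable (fun j : ℕ => ((j + k).choose k : ℝ)) (geometricMeasure p) := by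
  rw [integrable_geometricMeasure_iff hp]
  refine ((summable_choose_mul_geometric_of_norm_lt_one k
    (norm_one_sub_coe_lt_one hp)).mul_right (p : ℝ)).congr fun j => ?_
  rw [Real.norm_natCast]
  ring

lemma integral_choose_geometricMeasure (hp : p ≠ 0) (k : ℕ) :
    ∫ j : ℕ, ((j + k).choose k : ℝ) ∂geometricMeasure p = 1 / (p : ℝ) ^ k := by
  have hp' : (p : ℝ) ≠ 0 := by simpa using hp
  have hsum := (hasSum_choose_mul_geometric_of_norm_lt_one k
    (norm_one_sub_coe_lt_one hp)).mul_right (p : ℝ)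
  rw [integral_geometricMeasure hp]
  calc ∑' j : ℕ, ((1 - p : ℝ) ^ j * p) • ((j + k).choose k : ℝ)
      = ∑' j : ℕ, ((j + k).choose k : ℝ) * (1 - p) ^ j * p :=
        tsum_congr fun j => by rw [smul_eq_mul]; ring
    _ = 1 / (1 - (1 - p : ℝ)) ^ (k + 1) * p := hsum.tsum_eq
    _ = 1 / (p : ℝ) ^ k := by rw [sub_sub_cancel, pow_succ]; field_simp

lemma natCast_sq_eq_choose_sub (j : ℕ) :
    (j : ℝ) ^ 2 = 2 * ((j + 2).choose 2 : ℝ) - 3 * ((j + 1).choose 1 : ℝ) + 1 := by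
  rw [Nat.cast_choose_two, Nat.choose_one_right]
  push_cast
  ring

lemma memLp_natCast_geometricMeasure (hp : p ≠ 0) :
    MemLp (fun j : ℕ => (j : ℝ)) 2 (geometricMeasure p) := by
  rw [memLp_two_iff_integrable_sq (by fun_prop)]
  simp_rw [natCast_sq_eq_choose_sub]
  exact (((integrable_choose_geometricMeasure hp 2).const_mul 2).sub
    ((integrable_choose_geometricMeasure hp 1).const_mul 3)).add (integrable_const 1)

lemma integral_natCast_geometricMeasure (hp : p ≠ 0) :
    ∫ j : ℕ, (j : ℝ) ∂geometricMeasure p = 1 / (p : ℝ) - 1 := by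
  calc ∫ j : ℕ, (j : ℝ) ∂geometricMeasure p
      = ∫ j : ℕ, (((j + 1).choose 1 : ℝ) - 1) ∂geometricMeasure p := by simp
    _ = 1 / (p : ℝ) - 1 := by
      rw [integral_sub (integrable_choose_geometricMeasure hp 1) (integrable_const 1),
        integral_choose_geometricMeasure hp]
      simp

lemma variance_natCast_geometricMeasure (hp : p ≠ 0) :
    Var[fun j : ℕ => (j : ℝ); geometricMeasure p] = (1 - p) / (p : ℝ) ^ 2 := by
  have hp' : (p : ℝ) ≠ 0 := by simpa using hp
  rw [variance_eq_sub (memLp_natCast_geometricMeasure hp), integral_natCast_geometricMeasure hp]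
  simp only [Pi.pow_apply]
  simp_rw [natCast_sq_eq_choose_sub]
  have h₁ := (integrable_choose_geometricMeasure hp 1).const_mul 3
  have h₂ := (integrable_choose_geometricMeasure hp 2).const_mul 2
  rw [integral_add (by exact h₂.sub h₁) (integrable_const 1), integral_sub h₂ h₁,
    integral_const_mul, integral_const_mul, integral_choose_geometricMeasure hp,
    integral_choose_geometricMeasure hp, integral_const, probReal_univ, one_smul]
  field_simp
  ring

lemma setIntegral_pi_geometricMeasure {ι G : Type*} [Fintype ι] [DecidableEq ι]
    [NormedAddCommGroup G] [NormedSpace ℝ G] [CompleteSpace G] (hp : p ≠ 0) (n : ℕ)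
    (g : (ι → ℕ) → G) :
    ∫ a in {a | ∑ i, a i = n}, g a ∂Measure.pi (fun _ => geometricMeasure p) =
      ((1 - p) ^ n * (p : ℝ) ^ Fintype.card ι) • ∑ a ∈ piAntidiag univ n, g a := by
  have hset : {a : ι → ℕ | ∑ i, a i = n} = ↑(piAntidiag (univ : Finset ι) n) := by
    ext a
    simp
  rw [hset, setIntegral_finset _ (.of_finite (finite_toSet _)), smul_sum]
  refine sum_congr rfl fun a ha => ?_
  rw [mem_piAntidiag] at ha
  rw [measureReal_def, Measure.pi_singleton, ENNReal.toReal_prod]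
  simp_rw [← measureReal_def, geometricMeasure_real_singleton hp]
  rw [prod_mul_distrib, prod_pow_eq_pow_sum, ha.1, prod_const, card_univ]

lemma setIntegral_pi_geometricMeasure_div_measureReal {ι : Type*} [Fintype ι] [DecidableEq ι]
    (hp₀ : p ≠ 0) (hp₁ : p ≠ 1) (n : ℕ) (g : (ι → ℕ) → ℂ) :
    (∫ a in {a | ∑ i, a i = n}, g a ∂Measure.pi fun _ => geometricMeasure p) /
        (Measure.pi fun _ => geometricMeasure p).real {a : ι → ℕ | ∑ i, a i = n} =
      (∑ a ∈ piAntidiag univ n, g a) / #(piAntidiag (univ : Finset ι) n) := by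
  have hp₀' : (p : ℝ) ≠ 0 := by simpa using hp₀
  have hp₁' : (1 - p : ℝ) ≠ 0 := sub_ne_zero.2 (Subtype.coe_ne_coe.2 hp₁).symm
  have hreal := setIntegral_pi_geometricMeasure (ι := ι) hp₀ n fun _ => (1 : ℝ)
  simp only [setIntegral_const, smul_eq_mul, mul_one, sum_const, nsmul_eq_mul] at hreal
  rw [setIntegral_pi_geometricMeasure hp₀, hreal, Complex.real_smul,
    Complex.ofReal_mul (_ * _) (#_ : ℝ), mul_div_mul_left _ _ (Complex.ofReal_ne_zero.2
      (by positivity)), Complex.ofReal_natCast]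

end GeometricLaw

section Occupancy

open Complex

lemma residualVariance_indicator_singleton_sub_const {E : Type*} [MeasurableSpace E]
    [MeasurableSingletonClass E] {μ : Measure E} [IsProbabilityMeasure μ] {Y : E → ℝ}
    (hY : MemLp Y 2 μ) (x : E) (c : ℝ) :
    residualVariance (fun y => Set.indicator {x} 1 y - c) Y μ =
      μ.real {x} * (1 - μ.real {x}) - (μ.real {x} * (Y x - μ[Y])) ^ 2 / Var[Y; μ] := by
  have hind : MemLp (Set.indicator {x} (1 : E → ℝ)) 2 μ :=
    (memLp_const 1).indicator (measurableSet_singleton x)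
  have hmean := integral_indicator_one (μ := μ) (measurableSet_singleton x)
  have hsq : Set.indicator {x} (1 : E → ℝ) ^ 2 = Set.indicator {x} 1 := by
    ext y
    by_cases hy : y = x <;> simp [hy]
  have hmul : Set.indicator {x} (1 : E → ℝ) * Y = Set.indicator {x} Y := by
    ext y
    by_cases hy : y = x <;> simp [hy]
  rw [residualVariance, variance_sub_const hind.aestronglyMeasurable,
    covariance_sub_const_left (hind.integrable one_le_two), variance_eq_sub hind,
    covariance_eq_sub hind hY, hsq, hmul, hmean,
    integral_indicator (measurableSet_singleton x), integral_singleton, smul_eq_mul]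
  ring

/-- The parameter `1 / 2`, for which the geometric law has mean `1`. -/
noncomputable def oneHalf : unitInterval :=
  ⟨1 / 2, by norm_num, by norm_num⟩

@[simp]
lemma coe_oneHalf : (oneHalf : ℝ) = 1 / 2 :=
  rfl

lemma oneHalf_ne_zero : oneHalf ≠ 0 := by
  simp [← Subtype.coe_ne_coe]

lemma oneHalf_ne_one : oneHalf ≠ 1 := by
  rw [← Subtype.coe_ne_coe]
  norm_num

/-- The geometric law of mean `1`. -/
noncomputable abbrev criticalGeometric : Measure ℕ :=
  geometricMeasure oneHalf

/-- The indicator of `{l}`, centered for `criticalGeometric`. -/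
noncomputable def centeredIndicator (l : ℕ) (j : ℕ) : ℝ :=
  Set.indicator {l} 1 j - (1 / 2) ^ (l + 1)

lemma criticalGeometric_real_singleton (j : ℕ) :
    criticalGeometric.real {j} = (1 / 2) ^ (j + 1) := by
  rw [geometricMeasure_real_singleton oneHalf_ne_zero, pow_succ]
  norm_num

lemma memLp_centeredIndicator (l : ℕ) : MemLp (centeredIndicator l) 2 criticalGeometric := by
  have hind : MemLp (Set.indicator {l} (1 : ℕ → ℝ)) 2 criticalGeometric :=
    (memLp_const 1).indicator (measurableSet_singleton l)
  exact hind.sub (memLp_const _)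

lemma integral_centeredIndicator (l : ℕ) : ∫ j, centeredIndicator l j ∂criticalGeometric = 0 := by
  have hind : Integrable (Set.indicator {l} (1 : ℕ → ℝ)) criticalGeometric :=
    (integrable_const 1).indicator (measurableSet_singleton l)
  simp_rw [centeredIndicator]
  rw [integral_sub hind (integrable_const _), integral_indicator_one (measurableSet_singleton l),
    criticalGeometric_real_singleton]
  simp

lemma residualVariance_centeredIndicator (l : ℕ) :
    residualVariance (centeredIndicator l) (fun j => (j : ℝ)) criticalGeometric =
      limitVariance l := by
  unfold centeredIndicator
  rw [residualVariance_indicator_singleton_sub_const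
    (memLp_natCast_geometricMeasure oneHalf_ne_zero),
    criticalGeometric_real_singleton, integral_natCast_geometricMeasure oneHalf_ne_zero,
    variance_natCast_geometricMeasure oneHalf_ne_zero, limitVariance]
  norm_num

lemma prod_criticalGeometric_ne_zero (l : ℕ) :
    (criticalGeometric.prod criticalGeometric) {z | centeredIndicator l z.1 =
      centeredIndicator l z.2 ∧ (z.1 : ℤ) = z.2 + 1} ≠ 0 := by
  have hpos (j : ℕ) : criticalGeometric {j} ≠ 0 := fun h => by
    have := criticalGeometric_real_singleton j
    rw [measureReal_def, h, ENNReal.toReal_zero] at this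
    exact (pow_pos one_half_pos _).ne this
  have hsubset : {l + 2} ×ˢ {l + 1} ⊆ {z : ℕ × ℕ | centeredIndicator l z.1 =
      centeredIndicator l z.2 ∧ (z.1 : ℤ) = z.2 + 1} := by
    rintro ⟨i, j⟩ ⟨rfl, rfl⟩
    simp [centeredIndicator]
    ring
  refine fun h => mul_ne_zero (hpos (l + 2)) (hpos (l + 1)) ?_
  rw [← Measure.prod_prod]
  exact measure_mono_null hsubset h

lemma sum_centeredIndicator {ι : Type*} [Fintype ι] (l : ℕ) (a : ι → ℕ) :
    ∑ i, centeredIndicator l (a i) = #{i | a i = l} - Fintype.card ι * (1 / 2 : ℝ) ^ (l + 1) := by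
  simp [centeredIndicator, Set.indicator_apply, sum_sub_distrib]

theorem tendsto_sum_piAntidiag_exp (l : ℕ) (t : ℝ) :
    Tendsto (fun n : ℕ => (∑ a ∈ piAntidiag (univ : Finset (Fin (n + 1))) n,
        cexp ((t * ((#{i | a i = l} - (n + 1) * (1 / 2) ^ (l + 1)) / √(n + 1)) : ℝ) * I)) /
          #(piAntidiag (univ : Finset (Fin (n + 1))) n)) atTop
      (𝓝 (cexp (-(limitVariance l * t ^ 2) / 2))) := by
  have hb : Tendsto (fun N : ℕ => (((N - 1 : ℤ) : ℝ) -
      N * ∫ j : ℕ, ((j : ℤ) : ℝ) ∂criticalGeometric) / √N) atTop (𝓝 0) := by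
    simp_rw [Int.cast_natCast]
    rw [integral_natCast_geometricMeasure oneHalf_ne_zero]
    have hsqrt : Tendsto (fun N : ℕ => √(N : ℝ)) atTop atTop :=
      Real.tendsto_sqrt_atTop.comp tendsto_natCast_atTop_atTop
    refine (hsqrt.const_div_atTop (-1)).congr fun N => ?_
    rw [coe_oneHalf]
    push_cast
    ring
  have hclt := (tendsto_setIntegral_exp_div_sqrt Measurable.of_discrete (memLp_centeredIndicator l)
    (integral_centeredIndicator l) Measurable.of_discrete
    (by simpa using memLp_natCast_geometricMeasure oneHalf_ne_zero)
    (prod_criticalGeometric_ne_zero l) hb t).comp (tendsto_add_atTop_nat 1)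
  simp_rw [Int.cast_natCast] at hclt
  rw [residualVariance_centeredIndicator] at hclt
  refine hclt.congr fun n => ?_
  have hset : {a : Fin (n + 1) → ℕ | ∑ i, (a i : ℤ) = ((n + 1 : ℕ) - 1 : ℤ)} =
      {a | ∑ i, a i = n} := by
    rw [Nat.cast_succ, add_sub_cancel_right]
    norm_cast
  simp only [Function.comp_apply]
  rw [hset, setIntegral_pi_geometricMeasure_div_measureReal oneHalf_ne_zero oneHalf_ne_one]
  simp_rw [sum_centeredIndicator, Fintype.card_fin, Nat.cast_succ]

end Occupancy

section UniformLaw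

/-- The law of `X` under the uniform probability measure on a finite type. -/
noncomputable def uniformLaw {Ω : Type*} [Fintype Ω] (X : Ω → ℝ) : Measure ℝ :=
  (Fintype.card Ω : ENNReal)⁻¹ • ∑ ω, Measure.dirac (X ω)

variable {Ω : Type*} [Fintype Ω]

instance [Nonempty Ω] (X : Ω → ℝ) : IsProbabilityMeasure (uniformLaw X) where
  measure_univ := by
    simp only [uniformLaw, Measure.smul_apply, Measure.coe_finsetSum, Finset.sum_apply,
      measure_univ, sum_const, card_univ, smul_eq_mul, nsmul_eq_mul, mul_one]
    exact ENNReal.inv_mul_cancel (Nat.cast_ne_zero.2 Fintype.card_ne_zero)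
      (ENNReal.natCast_ne_top _)

lemma charFun_uniformLaw (X : Ω → ℝ) (t : ℝ) :
    charFun (uniformLaw X) t =
      (∑ ω, Complex.exp ((t * X ω : ℝ) * Complex.I)) / Fintype.card Ω := by
  rw [charFun_apply_real, uniformLaw, integral_smul_measure,
    integral_finsetSum_measure fun ω _ => integrable_dirac enorm_lt_top]
  simp [div_eq_inv_mul]

lemma uniformLaw_real_Iic (X : Ω → ℝ) (y : ℝ) :
    (uniformLaw X).real (Set.Iic y) = Nat.card {ω // X ω ≤ y} / Fintype.card Ω := by
  classical
  simp only [measureReal_def, uniformLaw, Measure.smul_apply, Measure.coe_finsetSum,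
    Finset.sum_apply, smul_eq_mul, Measure.dirac_apply, Set.indicator_apply,
    Set.mem_Iic, Pi.one_apply]
  rw [sum_boole, ENNReal.toReal_mul, ENNReal.toReal_inv, ENNReal.toReal_natCast,
    ENNReal.toReal_natCast, div_eq_inv_mul, Nat.card_eq_fintype_card, Fintype.card_subtype]

lemma tendsto_measureReal_Iic_of_tendsto_charFun {ν : ℕ → Measure ℝ} {ν₀ : Measure ℝ}
    [∀ n, IsProbabilityMeasure (ν n)] [IsProbabilityMeasure ν₀] {y : ℕ → ℝ} {y₀ : ℝ}
    (hν : ∀ t, Tendsto (fun n => charFun (ν n) t) atTop (𝓝 (charFun ν₀ t)))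
    (hy : Tendsto y atTop (𝓝 y₀)) (hy₀ : ν₀ {y₀} = 0) :
    Tendsto (fun n => (ν n).real (Set.Iic (y n))) atTop (𝓝 (ν₀.real (Set.Iic y₀))) := by
  have hmeas (c : ℝ) : Measurable fun z : ℝ => z + c := by fun_prop
  let shifted (n : ℕ) : ProbabilityMeasure ℝ :=
    ⟨(ν n).map fun z => z + (y₀ - y n), Measure.isProbabilityMeasure_map (hmeas _).aemeasurable⟩
  have hshift : Tendsto shifted atTop (𝓝 ⟨ν₀, inferInstance⟩) := by
    refine ProbabilityMeasure.tendsto_iff_tendsto_charFun.2 fun t => ?_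
    have hcont : Continuous fun d : ℝ => Complex.exp (d * t * Complex.I) := by fun_prop
    have hphase := (hcont.tendsto 0).comp (sub_self y₀ ▸ hy.const_sub y₀)
    have hlim := (hν t).mul hphase
    simp only [Complex.ofReal_zero, zero_mul, Complex.exp_zero, mul_one] at hlim
    refine hlim.congr fun n => ?_
    simp [shifted, charFun_map_add_const, mul_comm]
  have hlim := ProbabilityMeasure.tendsto_measure_of_null_frontier_of_tendsto' hshift
    (E := Set.Iic y₀) (by rwa [frontier_Iic])
  refine ((ENNReal.tendsto_toReal (measure_ne_top ν₀ _)).comp hlim).congr fun n => ?_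
  have hpreimage : (fun z => z + (y₀ - y n)) ⁻¹' Set.Iic y₀ = Set.Iic (y n) := by
    rw [Set.preimage_add_const_Iic, sub_sub_cancel]
  change ((ν n).map _ _).toReal = _
  rw [Measure.map_apply (hmeas _) measurableSet_Iic, hpreimage, measureReal_def]

end UniformLaw

section StandardizedBlocks

variable {l : ℕ}

/-- The number of blocks of size `l`, centered and scaled by the leading terms of its mean and
standard deviation. -/
noncomputable def standardizedBlocksOfSize (l : ℕ) {n : ℕ} (P : NCPart n) : ℝ :=
  (numBlocksOfSize l P - (n + 1) * (1 / 2) ^ (l + 1)) / (√(limitVariance l) * √(n + 1))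

lemma sum_numBlocksOfSize_div_card (n : ℕ) (hl : 1 ≤ l) (g : ℕ → ℂ) :
    (∑ P : NCPart n, g (numBlocksOfSize l P)) / Fintype.card (NCPart n) =
      (∑ a ∈ piAntidiag (univ : Finset (Fin (n + 1))) n, g #{i | a i = l}) /
        #(piAntidiag (univ : Finset (Fin (n + 1))) n) := by
  have hcard := nsmul_sum_numBlocksOfSize n hl fun _ => (1 : ℂ)
  simp only [sum_const, card_univ, nsmul_eq_mul, mul_one] at hcard
  rw [← nsmul_sum_numBlocksOfSize n hl g, ← hcard, nsmul_eq_mul,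
    mul_div_mul_left _ _ (Nat.cast_ne_zero.2 n.succ_ne_zero)]

lemma tendsto_charFun_standardizedBlocksOfSize (hl : 1 ≤ l) (t : ℝ) :
    Tendsto (fun n => charFun (uniformLaw fun P : NCPart n => standardizedBlocksOfSize l P) t)
      atTop (𝓝 (charFun (gaussianReal 0 1) t)) := by
  have hv := limitVariance_pos l
  have hlim := tendsto_sum_piAntidiag_exp l (t / √(limitVariance l))
  have hgauss : charFun (gaussianReal 0 1) t =
      Complex.exp (-(limitVariance l * ↑(t / √(limitVariance l)) ^ 2) / 2) := by
    have hsq : limitVariance l * (t / √(limitVariance l)) ^ 2 = t ^ 2 := by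
      rw [div_pow, Real.sq_sqrt hv.le, mul_div_cancel₀ _ hv.ne']
    rw [charFun_gaussianReal, ← Complex.ofReal_pow (t / _), ← Complex.ofReal_mul (limitVariance l),
      hsq]
    simp [neg_div]
  rw [hgauss]
  refine hlim.congr fun n => ?_
  rw [charFun_uniformLaw, ← sum_numBlocksOfSize_div_card n hl fun k => Complex.exp
    ((t / √(limitVariance l) * ((k - (n + 1) * (1 / 2) ^ (l + 1)) / √(n + 1)) : ℝ) * Complex.I)]
  simp_rw [standardizedBlocksOfSize, div_mul_div_comm, mul_div_assoc]

lemma tendsto_threshold (hl : 1 ≤ l) (x : ℝ) :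
    Tendsto (fun n : ℕ => (meanBlocksOfSize l n + x * √(varBlocksOfSize l n) -
      (n + 1) * (1 / 2) ^ (l + 1)) / (√(limitVariance l) * √(n + 1))) atTop (𝓝 x) := by
  have hsqrt : √(limitVariance l) ≠ 0 := (Real.sqrt_pos.2 (limitVariance_pos l)).ne'
  have hlim := ((tendsto_meanBlocksOfSize hl).add
    ((tendsto_varBlocksOfSize hl).sqrt.const_mul x)).div_const √(limitVariance l)
  rw [zero_add, mul_div_cancel_right₀ _ hsqrt] at hlim
  refine hlim.congr fun n => ?_
  rw [Real.sqrt_div' _ (by positivity)]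
  field_simp
  ring

end StandardizedBlocks

end NonCrossing

/-- Central limit theorem for the number of blocks of a fixed size
`l ≥ 1`: with `μ_n` the mean and `σ_n²` the variance of `X_n^{(l)}`, for every real `x`
the probability `(1/C_n)·#{π ∈ NC(n) : k_l(π) ≤ μ_n + x σ_n}` converges to `Φ(x)`,
the standard Gaussian cumulative distribution function. -/
theorem numBlocksOfSize_CLT (l : ℕ) (hl : 1 ≤ l) (x : ℝ) :
    Tendsto
      (fun n : ℕ =>
        (Nat.card {π : NCPart n //
            (numBlocksOfSize l π : ℝ) ≤
              meanBlocksOfSize l n + x * Real.sqrt (varBlocksOfSize l n)} : ℝ) /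
          (Fintype.card (NCPart n) : ℝ))
      atTop
      (nhds (((gaussianReal 0 1) (Set.Iic x)).toReal)) := by
  have hnull := nullSingletonClass_gaussianReal (μ := 0) (one_ne_zero (α := NNReal))
  have hlim := NonCrossing.tendsto_measureReal_Iic_of_tendsto_charFun
    (NonCrossing.tendsto_charFun_standardizedBlocksOfSize hl)
    (NonCrossing.tendsto_threshold hl x) (hnull.measure_singleton x)
  refine hlim.congr fun n => ?_
  have hscale : 0 < √(NonCrossing.limitVariance l) * √((n : ℝ) + 1) :=
    mul_pos (Real.sqrt_pos.2 (NonCrossing.limitVariance_pos l)) (by positivity)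
  simp_rw [NonCrossing.uniformLaw_real_Iic, NonCrossing.standardizedBlocksOfSize,
    div_le_div_iff_of_pos_right hscale, sub_le_sub_iff_right]
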